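/- Let X_n be a sequence of non-negative integer random variables whose probability generating functions satisfy E[x^{X_n}] = c(x)·z₀(1)^n/z₀(x)^n·(1 + o(1)) uniformly for x in a complex neighborhood of 1, where z₀(x) is analytic and nonzero near 1, c is analytic and nonzero near 1, and z₀'(1) ≠ 0. Then (X_n − μn)/√n converges in distribution to N(0, σ²), where μ = −z₀'(1)/z₀(1) and σ² = μ + μ² − z₀''(1)/z₀(1); moreover E X_n = μn + O(1) and Var X_n = σ²n + O(1). -/

import Mathlib

open Filter Topology MeasureTheory ProbabilityTheory Asymptotics

/-- Differentiating the exponential of an analytic function twice at a zero of that function. -/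
lemma deriv_and_iteratedDeriv_two_of_eventuallyEq_cexp {M f : ℂ → ℂ} {a : ℂ}
    (hf : AnalyticAt ℂ f a) (hfa : f a = 0) (hM : M =ᶠ[𝓝 a] fun s ↦ Complex.exp (f s)) :
    deriv M a = deriv f a ∧ iteratedDeriv 2 M a = iteratedDeriv 2 f a + deriv f a ^ 2 := by
  have h1 : deriv M =ᶠ[𝓝 a] fun s ↦ Complex.exp (f s) * deriv f s := by
    filter_upwards [hM.deriv, hf.eventually_analyticAt] with s hs hfs
    rw [hs, hfs.differentiableAt.hasDerivAt.cexp.deriv]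
  have h2 : HasDerivAt (fun s ↦ Complex.exp (f s) * deriv f s) _ a :=
    hf.differentiableAt.hasDerivAt.cexp.mul hf.deriv.differentiableAt.hasDerivAt
  refine ⟨by simp [h1.eq_of_nhds, hfa], ?_⟩
  simp only [iteratedDeriv_succ, iteratedDeriv_zero]
  rw [h1.deriv_eq, h2.deriv, hfa, Complex.exp_zero]
  ring

/-- If the moment generating function is `exp ∘ f` near `0`, then the mean and the variance are the
first two derivatives of `f` at `0`. -/
lemma integral_and_variance_of_complexMGF_eq_cexp {Ω : Type*} [MeasurableSpace Ω]
    {P : Measure Ω} [IsProbabilityMeasure P] {Y : Ω → ℝ} {f : ℂ → ℂ}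
    (hY : 0 ∈ interior (integrableExpSet Y P)) (hf : AnalyticAt ℂ f 0) (hf0 : f 0 = 0)
    (hM : complexMGF Y P =ᶠ[𝓝 0] fun s ↦ Complex.exp (f s)) :
    ((∫ ω, Y ω ∂P : ℝ) : ℂ) = deriv f 0 ∧
      ((∫ ω, (Y ω - ∫ ω', Y ω' ∂P) ^ 2 ∂P : ℝ) : ℂ) = iteratedDeriv 2 f 0 := by
  obtain ⟨h1, h2⟩ := deriv_and_iteratedDeriv_two_of_eventuallyEq_cexp hf hf0 hM
  have hmean : ((∫ ω, Y ω ∂P : ℝ) : ℂ) = deriv f 0 := by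
    have := iteratedDeriv_complexMGF (z := 0) (by simpa using hY) 1
    rw [iteratedDeriv_one, h1] at this
    rw [this, ← integral_complex_ofReal]
    simp
  refine ⟨hmean, ?_⟩
  have hsq : ((∫ ω, Y ω ^ 2 ∂P : ℝ) : ℂ) = iteratedDeriv 2 f 0 + deriv f 0 ^ 2 := by
    have := iteratedDeriv_complexMGF (z := 0) (by simpa using hY) 2
    rw [h2] at this
    rw [this, ← integral_complex_ofReal]
    simp
  have hL : MemLp Y 2 P := memLp_of_mem_interior_integrableExpSet hY 2
  have hvar := variance_eq_integral hL.aemeasurable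
  rw [variance_eq_sub hL] at hvar
  rw [← hvar]
  push_cast [Pi.pow_apply]
  rw [hsq, hmean]
  ring

lemma tendsto_const_div_sqrt_nat (a : ℂ) :
    Tendsto (fun n : ℕ ↦ a / ((√n : ℝ) : ℂ)) atTop (𝓝 0) := by
  rw [tendsto_zero_iff_norm_tendsto_zero]
  simp only [norm_div, Complex.norm_real, Real.norm_eq_abs, abs_of_nonneg (Real.sqrt_nonneg _)]
  exact tendsto_const_nhds.div_atTop
    (Real.tendsto_sqrt_atTop.comp tendsto_natCast_atTop_atTop)

/-- Second order Taylor expansion of an analytic function, along the scale `1 / √n`. -/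
lemma tendsto_nat_mul_taylor_div_sqrt {q : ℂ → ℂ} (hq : AnalyticAt ℂ q 0) (hq0 : q 0 = 0) (a : ℂ) :
    Tendsto (fun n : ℕ ↦ (n : ℂ) * (q (a / (√n : ℝ)) - deriv q 0 * (a / (√n : ℝ)))) atTop
      (𝓝 (iteratedDeriv 2 q 0 / 2 * a ^ 2)) := by
  have hT : (fun y ↦ q y - (deriv q 0 * y + iteratedDeriv 2 q 0 / 2 * y ^ 2))
      =O[𝓝 0] fun y : ℂ ↦ ‖y‖ ^ 3 := by
    refine (hq.hasFPowerSeriesAt.isBigO_sub_partialSum_pow 3).congr_left fun y ↦ ?_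
    simp [FormalMultilinearSeries.partialSum, Finset.sum_range_succ, hq0, Nat.factorial]
    ring
  have hs : Tendsto (fun n : ℕ ↦ a / ((√n : ℝ) : ℂ)) atTop (𝓝 0) := tendsto_const_div_sqrt_nat _
  obtain ⟨C, hC⟩ := (hT.comp_tendsto hs).bound
  rw [tendsto_iff_norm_sub_tendsto_zero]
  have hlim : Tendsto (fun n : ℕ ↦ C * ‖a‖ ^ 2 * ‖a / ((√n : ℝ) : ℂ)‖) atTop (𝓝 0) := by
    simpa using (hs.norm.const_mul (C * ‖a‖ ^ 2))
  refine squeeze_zero' (.of_forall fun _ ↦ norm_nonneg _) ?_ hlim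
  filter_upwards [hC, eventually_gt_atTop 0] with n hn hn0
  have hsq : ((√n : ℝ) : ℂ) ^ 2 = n := by
    rw [← Complex.ofReal_pow, Real.sq_sqrt n.cast_nonneg, Complex.ofReal_natCast]
  have hn' : (n : ℂ) ≠ 0 := by exact_mod_cast hn0.ne'
  have ha : (n : ℂ) * (a / ((√n : ℝ) : ℂ)) ^ 2 = a ^ 2 := by
    rw [div_pow, hsq]; field_simp
  set y := a / ((√n : ℝ) : ℂ) with hy
  have hna : n * ‖y‖ ^ 2 = ‖a‖ ^ 2 := by simpa using congrArg norm ha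
  simp only [Function.comp_apply, norm_pow, norm_norm, ← hy] at hn
  calc ‖(n : ℂ) * (q y - deriv q 0 * y) - iteratedDeriv 2 q 0 / 2 * a ^ 2‖
      = n * ‖q y - (deriv q 0 * y + iteratedDeriv 2 q 0 / 2 * y ^ 2)‖ := by
        rw [← ha, ← Complex.norm_natCast n, ← norm_mul]
        congr 1
        ring
    _ ≤ n * (C * ‖y‖ ^ 3) := by gcongr
    _ = C * ‖a‖ ^ 2 * ‖y‖ := by rw [← hna]; ring

/-- Central limit theorem for moment generating functions of the form `exp (n q + k n)`, where
`k n` vanishes at `0` uniformly in `n`. -/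
lemma tendsto_integral_gaussianReal_of_complexMGF_eq_cexp {Ω : Type*} [MeasurableSpace Ω]
    {P : Measure Ω} [IsProbabilityMeasure P] {Y : ℕ → Ω → ℝ} (hY : ∀ n, Measurable (Y n))
    {q : ℂ → ℂ} (hq : AnalyticAt ℂ q 0) (hq0 : q 0 = 0) {μ : ℝ} (hμ : deriv q 0 = μ)
    {v : NNReal} (hv : iteratedDeriv 2 q 0 = ((v : ℝ) : ℂ)) {k : ℕ → ℂ → ℂ} {ρ D : ℝ} (hρ : 0 < ρ)
    (hk : ∀ᶠ n in atTop, ∀ s ∈ Metric.ball (0 : ℂ) ρ, ‖k n s‖ ≤ D * ‖s‖)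
    (hM : ∀ᶠ n : ℕ in atTop, ∀ s ∈ Metric.ball (0 : ℂ) ρ,
      complexMGF (Y n) P s = Complex.exp (n * q s + k n s))
    (f : BoundedContinuousFunction ℝ ℝ) :
    Tendsto (fun n : ℕ ↦ ∫ ω, f ((Y n ω - μ * n) / √n) ∂P) atTop
      (𝓝 (∫ y, f y ∂(gaussianReal 0 v))) := by
  have hm (n : ℕ) : Measurable fun ω ↦ (Y n ω - μ * n) / √n := by fun_prop
  let ν : ℕ → ProbabilityMeasure ℝ := fun n ↦
    ⟨P.map fun ω ↦ (Y n ω - μ * n) / √n, Measure.isProbabilityMeasure_map (hm n).aemeasurable⟩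
  let ν₀ : ProbabilityMeasure ℝ := ⟨gaussianReal 0 v, inferInstance⟩
  suffices h : Tendsto ν atTop (𝓝 ν₀) by
    refine (ProbabilityMeasure.tendsto_iff_forall_integral_tendsto.1 h f).congr fun n ↦ ?_
    exact integral_map (hm n).aemeasurable f.continuous.aestronglyMeasurable
  refine ProbabilityMeasure.tendsto_of_tendsto_charFun fun t ↦ ?_
  have hs : Tendsto (fun n : ℕ ↦ t * Complex.I / ((√n : ℝ) : ℂ)) atTop (𝓝 0) :=
    tendsto_const_div_sqrt_nat _
  have hball := hs.eventually (Metric.ball_mem_nhds 0 hρ)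
  have hk0 : Tendsto (fun n : ℕ ↦ k n (t * Complex.I / ((√n : ℝ) : ℂ))) atTop (𝓝 0) := by
    refine squeeze_zero_norm' ?_ (by simpa only [norm_zero, mul_zero] using hs.norm.const_mul D)
    filter_upwards [hk, hball] with n hn hb using hn _ hb
  have hlim := ((tendsto_nat_mul_taylor_div_sqrt hq hq0 (t * Complex.I)).add hk0).cexp
  have hgauss : charFun (ν₀ : Measure ℝ) t =
      Complex.exp (iteratedDeriv 2 q 0 / 2 * (t * Complex.I) ^ 2 + 0) := by
    change charFun (gaussianReal 0 v) t = _
    rw [charFun_gaussianReal, hv, mul_pow, Complex.I_sq]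
    congr 1
    push_cast
    ring
  rw [hgauss]
  refine hlim.congr' ?_
  filter_upwards [hM, hball, eventually_gt_atTop 0] with n hn hb hn0
  have hr : ((√n : ℝ) : ℂ) ≠ 0 := by
    exact_mod_cast (Real.sqrt_pos.2 (Nat.cast_pos.2 hn0)).ne'
  change _ = charFun (P.map fun ω ↦ (Y n ω - μ * n) / √n) t
  rw [← complexMGF_mul_I (hm n).aemeasurable]
  have hshift : complexMGF (fun ω ↦ (Y n ω - μ * n) / √n) P (t * Complex.I) =
      Complex.exp (-(n * (μ * (t * Complex.I / ((√n : ℝ) : ℂ))))) *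
        complexMGF (Y n) P (t * Complex.I / ((√n : ℝ) : ℂ)) := by
    simp only [complexMGF]
    rw [← integral_const_mul]
    congr 1 with ω
    rw [← Complex.exp_add]
    congr 1
    push_cast
    field_simp
    ring
  rw [hshift, hn _ hb, ← Complex.exp_add, hμ]
  congr 1
  ring

/-- A quasi-power asymptotic `exp (l + n q) (1 + e n)`, with `‖e n‖ ≤ 1 / 2`, of the moment generating
functions can be written as `exp (n q + k n)` with `k n` holomorphic and bounded uniformly in `n`. -/
lemma exists_cexp_remainder_of_complexMGF_quasi_power {Ω : Type*} [MeasurableSpace Ω]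
    {P : Measure Ω} [IsProbabilityMeasure P] {Y : ℕ → Ω → ℝ} (hY : ∀ n, Measurable (Y n))
    {l q : ℂ → ℂ} {ρ : ℝ} (hρ : 0 < ρ) (hl : DifferentiableOn ℂ l (Metric.ball 0 ρ))
    (hq : DifferentiableOn ℂ q (Metric.ball 0 ρ)) (hl0 : l 0 = 0) (hq0 : q 0 = 0)
    {B : ℝ} (hB : ∀ s ∈ Metric.ball (0 : ℂ) ρ, ‖l s‖ ≤ B) {e : ℕ → ℂ → ℂ}
    (he : ∀ᶠ n in atTop, ∀ s ∈ Metric.ball (0 : ℂ) ρ, ‖e n s‖ ≤ 1 / 2)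
    (hM : ∀ᶠ n : ℕ in atTop, ∀ s ∈ Metric.ball (0 : ℂ) ρ,
      complexMGF (Y n) P s = Complex.exp (l s + n * q s) * (1 + e n s)) :
    ∃ k : ℕ → ℂ → ℂ, ∀ᶠ n : ℕ in atTop, 0 ∈ interior (integrableExpSet (Y n) P) ∧
      DifferentiableOn ℂ (k n) (Metric.ball 0 ρ) ∧ k n 0 = 0 ∧
      (∀ s ∈ Metric.ball (0 : ℂ) ρ, ‖k n s‖ ≤ B + 1) ∧
      ∀ s ∈ Metric.ball (0 : ℂ) ρ, complexMGF (Y n) P s = Complex.exp (n * q s + k n s) := by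
  refine ⟨fun n s ↦ l s + Complex.log (complexMGF (Y n) P s * Complex.exp (-(l s + n * q s))), ?_⟩
  filter_upwards [he, hM] with n hen hMn
  have hH : ∀ s ∈ Metric.ball (0 : ℂ) ρ,
      complexMGF (Y n) P s * Complex.exp (-(l s + n * q s)) = 1 + e n s := by
    intro s hs
    rw [hMn s hs, mul_right_comm, ← Complex.exp_add, add_neg_cancel, Complex.exp_zero, one_mul]
  have hslit : ∀ s ∈ Metric.ball (0 : ℂ) ρ, 1 + e n s ∈ Complex.slitPlane := fun s hs ↦
    Complex.mem_slitPlane_of_norm_lt_one ((hen s hs).trans_lt (by norm_num))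
  have hsub : Metric.ball (0 : ℝ) ρ ⊆ integrableExpSet (Y n) P := by
    intro t ht
    by_contra hnot
    have hts : (t : ℂ) ∈ Metric.ball (0 : ℂ) ρ := by simpa using ht
    have h0 : complexMGF (Y n) P t = 0 := complexMGF_undef (hY n).aemeasurable hnot
    rw [hMn _ hts] at h0
    exact mul_ne_zero (Complex.exp_ne_zero _) (Complex.slitPlane_ne_zero (hslit _ hts)) h0
  have hint : Metric.ball (0 : ℝ) ρ ⊆ interior (integrableExpSet (Y n) P) :=
    interior_maximal hsub Metric.isOpen_ball
  have hdM : DifferentiableOn ℂ (complexMGF (Y n) P) (Metric.ball 0 ρ) := by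
    refine differentiableOn_complexMGF.mono fun s hs ↦ hint ?_
    simp only [Metric.mem_ball, dist_zero_right] at hs ⊢
    exact (Complex.abs_re_le_norm s).trans_lt hs
  refine ⟨hint (Metric.mem_ball_self hρ), ?_, ?_, ?_, ?_⟩
  · refine hl.add ((hdM.mul (hl.add (hq.const_mul _)).neg.cexp).clog fun s hs ↦ ?_)
    simpa [← hH s hs] using hslit s hs
  · simp [complexMGF, hl0, hq0]
  · intro s hs
    rw [hH s hs]
    refine (norm_add_le _ _).trans (add_le_add (hB s hs) ?_)
    have := Complex.norm_log_one_add_half_le_self (hen s hs)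
    linarith [hen s hs]
  · intro s hs
    rw [hH s hs, ← add_assoc, Complex.exp_add, Complex.exp_log
      (Complex.slitPlane_ne_zero (hslit s hs)), add_comm ((n : ℂ) * q s), hMn s hs]

/-- Quasi-power theorem for moment generating functions `exp (n q + k n)`, with `k n` holomorphic,
bounded uniformly in `n`, and zero at `0`. -/
lemma quasi_power_of_complexMGF_eq_cexp {Ω : Type*} [MeasurableSpace Ω]
    {P : Measure Ω} [IsProbabilityMeasure P] {Y : ℕ → Ω → ℝ} (hY : ∀ n, Measurable (Y n))
    {q : ℂ → ℂ} {ρ : ℝ} (hρ : 0 < ρ) (hq : AnalyticAt ℂ q 0) (hq0 : q 0 = 0)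
    {μ : ℝ} (hμ : deriv q 0 = μ) {v : NNReal} (hv : iteratedDeriv 2 q 0 = ((v : ℝ) : ℂ))
    {k : ℕ → ℂ → ℂ} {C : ℝ}
    (hk : ∀ᶠ n : ℕ in atTop, 0 ∈ interior (integrableExpSet (Y n) P) ∧
      DifferentiableOn ℂ (k n) (Metric.ball 0 ρ) ∧ k n 0 = 0 ∧
      (∀ s ∈ Metric.ball (0 : ℂ) ρ, ‖k n s‖ ≤ C) ∧
      ∀ s ∈ Metric.ball (0 : ℂ) ρ, complexMGF (Y n) P s = Complex.exp (n * q s + k n s)) :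
    (∀ f : BoundedContinuousFunction ℝ ℝ,
      Tendsto (fun n : ℕ ↦ ∫ ω, f ((Y n ω - μ * n) / √n) ∂P) atTop
        (𝓝 (∫ y, f y ∂(gaussianReal 0 v)))) ∧
    (fun n : ℕ ↦ (∫ ω, Y n ω ∂P) - μ * n) =O[atTop] (fun _ : ℕ ↦ (1 : ℝ)) ∧
    (fun n : ℕ ↦ (∫ ω, (Y n ω - ∫ ω', Y n ω' ∂P) ^ 2 ∂P) - v * n)
      =O[atTop] (fun _ : ℕ ↦ (1 : ℝ)) := by
  have hcauchy (m : ℕ) : ∀ᶠ n in atTop,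
      ‖iteratedDeriv m (k n) 0‖ ≤ m.factorial * C / (ρ / 2) ^ m := by
    filter_upwards [hk] with n ⟨_, hd, _, hb, _⟩
    have hsub : Metric.closedBall (0 : ℂ) (ρ / 2) ⊆ Metric.ball 0 ρ :=
      Metric.closedBall_subset_ball (by linarith)
    exact Complex.norm_iteratedDeriv_le_of_forall_mem_sphere_norm_le m (by positivity)
      ((hd.mono hsub).diffContOnCl_ball subset_rfl)
      fun z hz ↦ hb z (hsub (Metric.sphere_subset_closedBall hz))
  have hmom : ∀ᶠ n : ℕ in atTop,
      ((∫ ω, Y n ω ∂P : ℝ) : ℂ) = n * μ + iteratedDeriv 1 (k n) 0 ∧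
      ((∫ ω, (Y n ω - ∫ ω', Y n ω' ∂P) ^ 2 ∂P : ℝ) : ℂ) =
        n * (v : ℝ) + iteratedDeriv 2 (k n) 0 := by
    filter_upwards [hk] with n ⟨hi, hd, h0, _, hMn⟩
    have hkan : AnalyticAt ℂ (k n) 0 := hd.analyticAt (Metric.ball_mem_nhds _ hρ)
    have hnq : AnalyticAt ℂ (fun s ↦ (n : ℂ) * q s) 0 := analyticAt_const.mul hq
    have hsum (m : ℕ) : iteratedDeriv m (fun s ↦ (n : ℂ) * q s + k n s) 0 =
        n * iteratedDeriv m q 0 + iteratedDeriv m (k n) 0 := by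
      rw [iteratedDeriv_fun_add hnq.contDiffAt hkan.contDiffAt,
        iteratedDeriv_const_mul_field]
    have := integral_and_variance_of_complexMGF_eq_cexp hi (hnq.add hkan) (by simp [hq0, h0])
      (eventually_of_mem (Metric.ball_mem_nhds _ hρ) hMn)
    rwa [← iteratedDeriv_one, Pi.add_def, hsum, hsum, hv, iteratedDeriv_one, hμ] at this
  refine ⟨?_, ?_, ?_⟩
  · refine tendsto_integral_gaussianReal_of_complexMGF_eq_cexp hY hq hq0 hμ hv hρ
      (D := C / ρ) (k := k) ?_ (hk.mono fun n hn ↦ hn.2.2.2.2)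
    filter_upwards [hk] with n ⟨_, hd, h0, hb, _⟩ s hs
    have := Complex.dist_le_div_mul_dist_of_mapsTo_ball (R₂ := C) hd
      (fun z hz ↦ by simpa [h0] using hb z hz) hs
    simpa [h0] using this
  · refine IsBigO.of_bound (Nat.factorial 1 * C / (ρ / 2) ^ 1) ?_
    filter_upwards [hmom, hcauchy 1] with n ⟨hn, _⟩ hb
    rw [norm_one, mul_one, ← Complex.norm_real]
    convert! hb using 2
    rw [Complex.ofReal_sub, hn]
    push_cast
    ring
  · refine IsBigO.of_bound (Nat.factorial 2 * C / (ρ / 2) ^ 2) ?_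
    filter_upwards [hmom, hcauchy 2] with n ⟨_, hn⟩ hb
    rw [norm_one, mul_one, ← Complex.norm_real]
    convert! hb using 2
    rw [Complex.ofReal_sub, hn]
    push_cast
    ring

/-- The first two derivatives at `0` of `s ↦ log (z 1 / z (exp s))`. -/
lemma deriv_log_const_div_comp_cexp {z : ℂ → ℂ} (hz : AnalyticAt ℂ z 1) (hz1 : z 1 ≠ 0) :
    AnalyticAt ℂ (fun s ↦ Complex.log (z 1 / z (Complex.exp s))) 0 ∧
    deriv (fun s ↦ Complex.log (z 1 / z (Complex.exp s))) 0 = -deriv z 1 / z 1 ∧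
    iteratedDeriv 2 (fun s ↦ Complex.log (z 1 / z (Complex.exp s))) 0 =
      -deriv z 1 / z 1 + (-deriv z 1 / z 1) ^ 2 - deriv (deriv z) 1 / z 1 := by
  have hexp : AnalyticAt ℂ Complex.exp 0 := analyticAt_cexp
  have hze : AnalyticAt ℂ (fun s ↦ z (Complex.exp s)) 0 :=
    AnalyticAt.fun_comp (by simpa using hz) hexp
  have hquot : AnalyticAt ℂ (fun s ↦ z 1 / z (Complex.exp s)) 0 :=
    analyticAt_const.div hze (by simpa using hz1)
  have hslit0 : z 1 / z (Complex.exp 0) ∈ Complex.slitPlane := by simp [hz1]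
  have hslit : ∀ᶠ s in 𝓝 0, z 1 / z (Complex.exp s) ∈ Complex.slitPlane :=
    hquot.continuousAt.eventually (Complex.isOpen_slitPlane.mem_nhds hslit0)
  have hne : ∀ᶠ s in 𝓝 0, z (Complex.exp s) ≠ 0 :=
    hze.continuousAt.eventually_ne (by simpa using hz1)
  have hzan : ∀ᶠ s in 𝓝 (0 : ℂ), AnalyticAt ℂ z (Complex.exp s) :=
    hexp.continuousAt.eventually (by simpa using hz.eventually_analyticAt)
  have h1 : deriv (fun s ↦ Complex.log (z 1 / z (Complex.exp s))) =ᶠ[𝓝 0]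
      fun s ↦ -(deriv z (Complex.exp s) * Complex.exp s) / z (Complex.exp s) := by
    filter_upwards [hslit, hne, hzan] with s hs hn ha
    have hd : HasDerivAt (fun s ↦ z (Complex.exp s)) (deriv z (Complex.exp s) * Complex.exp s) s :=
      ha.differentiableAt.hasDerivAt.comp s (Complex.hasDerivAt_exp s)
    rw [(((hasDerivAt_const s (z 1)).fun_div hd hn).clog hs).deriv]
    field_simp
    ring
  refine ⟨hquot.clog hslit0, by simpa using h1.eq_of_nhds, ?_⟩
  have hcomp {g : ℂ → ℂ} (hg : AnalyticAt ℂ g 1) :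
      HasDerivAt (fun s ↦ g (Complex.exp s)) (deriv g 1) 0 := by
    have hg' : HasDerivAt g (deriv g 1) (Complex.exp 0) := by
      simpa only [Complex.exp_zero] using hg.differentiableAt.hasDerivAt
    simpa [Function.comp_def] using hg'.comp 0 (Complex.hasDerivAt_exp 0)
  simp only [iteratedDeriv_succ, iteratedDeriv_zero]
  rw [h1.deriv_eq, (((hcomp hz.deriv).fun_mul (Complex.hasDerivAt_exp 0)).fun_neg.fun_div (hcomp hz)
    (by simpa using hz1)).deriv]
  simp
  field_simp
  ring

/-- Hwang's quasi-power theorem in the form used in the paper: if the probability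
generating functions satisfy `E[x^{X_n}] = c(x)·(z₀(1)/z₀(x))^n·(1 + o(1))`
uniformly for `x` in a complex neighborhood of `1`, with `c, z₀` analytic and
nonzero near `1` and `z₀'(1) ≠ 0`, then `(X_n − μn)/√n → N(0,σ²)` in
distribution with `μ = −z₀'(1)/z₀(1)`, `σ² = μ + μ² − z₀''(1)/z₀(1)`, and
`E X_n = μn + O(1)`, `Var X_n = σ²n + O(1)`. -/
theorem quasi_power_clt {Ω : Type*} [MeasurableSpace Ω]
    (P : Measure Ω) [IsProbabilityMeasure P]
    (X : ℕ → Ω → ℕ) (hX : ∀ n, Measurable (X n))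
    (c z₀ : ℂ → ℂ)
    (hc : AnalyticAt ℂ c 1) (hz₀ : AnalyticAt ℂ z₀ 1)
    (hcne : c 1 ≠ 0) (hz₀ne : z₀ 1 ≠ 0) (hz₀' : deriv z₀ 1 ≠ 0)
    (δ : ℝ) (hδ : 0 < δ)
    (hz₀ball : ∀ x ∈ Metric.ball (1 : ℂ) δ, z₀ x ≠ 0)
    (err : ℕ → ℂ → ℂ)
    (herr : ∀ e > (0 : ℝ), ∃ N : ℕ, ∀ n ≥ N, ∀ x ∈ Metric.ball (1 : ℂ) δ,
      ‖err n x‖ ≤ e)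
    (hpgf : ∀ n : ℕ, ∀ x ∈ Metric.ball (1 : ℂ) δ,
      (∫ ω, x ^ (X n ω) ∂P) = c x * (z₀ 1 / z₀ x) ^ n * (1 + err n x))
    (μ σ2 : ℝ) (hσ2 : 0 ≤ σ2)
    (hμ : (μ : ℂ) = -deriv z₀ 1 / z₀ 1)
    (hσ : (σ2 : ℂ) = (μ : ℂ) + (μ : ℂ) ^ 2 - deriv (deriv z₀) 1 / z₀ 1) :
    (∀ f : BoundedContinuousFunction ℝ ℝ,
      Filter.Tendsto
        (fun n : ℕ => ∫ ω, f (((X n ω : ℝ) - μ * n) / Real.sqrt n) ∂P)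
        Filter.atTop
        (𝓝 (∫ y, f y ∂(gaussianReal 0 ⟨σ2, hσ2⟩))))
    ∧ (fun n : ℕ => (∫ ω, (X n ω : ℝ) ∂P) - μ * n) =O[Filter.atTop]
        (fun _ : ℕ => (1 : ℝ))
    ∧ (fun n : ℕ =>
        (∫ ω, ((X n ω : ℝ) - ∫ ω', (X n ω' : ℝ) ∂P) ^ 2 ∂P) - σ2 * n)
        =O[Filter.atTop] (fun _ : ℕ => (1 : ℝ)) := by
  have hc1 : c 1 = 1 := by
    have h1 (n : ℕ) : c 1 * (1 + err n 1) = 1 := by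
      simpa [hz₀ne] using (hpgf n 1 (Metric.mem_ball_self hδ)).symm
    have herr0 : Tendsto (fun n ↦ err n 1) atTop (𝓝 0) := by
      refine Metric.tendsto_atTop.2 fun ε hε ↦ ?_
      obtain ⟨N, hN⟩ := herr (ε / 2) (half_pos hε)
      refine ⟨N, fun n hn ↦ ?_⟩
      simpa using (hN n hn 1 (Metric.mem_ball_self hδ)).trans_lt (half_lt_self hε)
    have hlim := (herr0.const_add 1).const_mul (c 1)
    simp only [h1, add_zero, mul_one] at hlim
    exact tendsto_nhds_unique hlim tendsto_const_nhds
  obtain ⟨hq, hq1, hq2⟩ := deriv_log_const_div_comp_cexp hz₀ hz₀ne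
  rw [← hμ] at hq1 hq2
  rw [← hσ] at hq2
  set q : ℂ → ℂ := fun s ↦ Complex.log (z₀ 1 / z₀ (Complex.exp s)) with hq_def
  have hq0 : q 0 = 0 := by simp [hq_def, hz₀ne]
  have hce : AnalyticAt ℂ (fun s ↦ c (Complex.exp s)) 0 :=
    AnalyticAt.fun_comp (by simpa using hc) analyticAt_cexp
  set l : ℂ → ℂ := fun s ↦ Complex.log (c (Complex.exp s)) with hl_def
  have hl : AnalyticAt ℂ l 0 := hce.clog (by simp [hc1])
  have hl0 : l 0 = 0 := by simp [hl_def, hc1]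
  have hball : ∀ᶠ s : ℂ in 𝓝 0, Complex.exp s ∈ Metric.ball (1 : ℂ) δ :=
    Complex.continuous_exp.continuousAt.eventually
      (by rw [Complex.exp_zero]; exact Metric.ball_mem_nhds 1 hδ)
  have hcne' : ∀ᶠ s : ℂ in 𝓝 0, c (Complex.exp s) ≠ 0 :=
    hce.continuousAt.eventually_ne (by simpa using hcne)
  have hl_bdd : ∀ᶠ s : ℂ in 𝓝 0, ‖l s‖ < 1 :=
    hl.continuousAt.norm.eventually_lt_const (by simp [hl0])
  obtain ⟨ρ, hρ, hsub⟩ := Metric.eventually_nhds_iff_ball.1 (hball.and (hcne'.and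
    (hl_bdd.and (hl.eventually_analyticAt.and hq.eventually_analyticAt))))
  have hY (n : ℕ) : Measurable fun ω ↦ (X n ω : ℝ) := by fun_prop
  obtain ⟨k, hk⟩ := exists_cexp_remainder_of_complexMGF_quasi_power (P := P) hY hρ
    (fun s hs ↦ (hsub s hs).2.2.2.1.differentiableAt.differentiableWithinAt)
    (fun s hs ↦ (hsub s hs).2.2.2.2.differentiableAt.differentiableWithinAt) hl0 hq0
    (B := 1) (fun s hs ↦ (hsub s hs).2.2.1.le) (e := fun n s ↦ err n (Complex.exp s))
    (by
      obtain ⟨N, hN⟩ := herr (1 / 2) (by norm_num)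
      filter_upwards [eventually_ge_atTop N] with n hn s hs using hN n hn _ (hsub s hs).1)
    (.of_forall fun n s hs ↦ by
      have hz : z₀ 1 / z₀ (Complex.exp s) ≠ 0 := div_ne_zero hz₀ne (hz₀ball _ (hsub s hs).1)
      rw [Complex.exp_add, Complex.exp_nat_mul, Complex.exp_log (hsub s hs).2.1,
        Complex.exp_log hz, ← hpgf n _ (hsub s hs).1, complexMGF]
      congr 1 with ω
      rw [← Complex.exp_nat_mul, mul_comm]
      simp)
  exact quasi_power_of_complexMGF_eq_cexp hY hρ hq hq0 hq1 (v := ⟨σ2, hσ2⟩) hq2 hk
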